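/- arXiv:0709.0420 — 8 statements merged into one kernel-verified Lean document; each statement's English description precedes it below -/
import Mathlib

section
/- There exists a free ultrafilter U on the natural numbers such that for every one-to-one function f : ℕ → ℕ there exists a set A ∈ U with f[A] belonging to the summable ideal, i.e., the sum of the reciprocals of the elements of f[A] is finite. -/
/-- A free ultrafilter on ℕ: an ultrafilter containing no finite set. -/
def IsFreeUltrafilter (U : Ultrafilter ℕ) : Prop :=
  ∀ s : Set ℕ, s.Finite → s ∉ U

/-- Membership in the summable ideal: the sum of reciprocals of the elements is finite. -/
def MemSummableIdeal (A : Set ℕ) : Prop :=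
  Summable fun a : A => (1 : ℝ) / ((a : ℕ) : ℝ)

lemma sum_inv_le (S : Finset ℕ) :
    ∑ a ∈ S, (1 : ℝ) / (a : ℝ) ≤ ∑ i ∈ Finset.range S.card, 2 / ((i : ℝ) + 1) := by
  induction S using Finset.induction_on_max with
  | empty => simp
  | insert m s hm ih =>
    have hms : m ∉ s := fun h => lt_irrefl _ (hm m h)
    rw [Finset.sum_insert hms, Finset.card_insert_of_notMem hms, Finset.sum_range_succ, add_comm]
    refine add_le_add ih ?_
    have hc : s.card ≤ m := by
      have : s ⊆ Finset.range m := fun x hx => Finset.mem_range.2 (hm x hx)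
      simpa using Finset.card_le_card this
    have hc' : (s.card : ℝ) ≤ m := by exact_mod_cast hc
    rcases Nat.eq_zero_or_pos m with h0 | h0
    · subst h0
      simp only [Nat.cast_zero, div_zero]
      positivity
    · have h1 : (1 : ℝ) ≤ m := by exact_mod_cast h0
      rw [div_le_div_iff₀ (by linarith) (by positivity)]
      linarith

lemma sum_inv_le_log (S : Finset ℕ) (N : ℕ) (hN : S.card ≤ N) :
    ∑ a ∈ S, (1 : ℝ) / (a : ℝ) ≤ 2 * (1 + Real.log N) := by
  refine (sum_inv_le S).trans ?_
  have h := harmonic_le_one_add_log N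
  have h2 : ∑ i ∈ Finset.range S.card, 2 / ((i : ℝ) + 1)
      ≤ ∑ i ∈ Finset.range N, 2 / ((i : ℝ) + 1) := by
    apply Finset.sum_le_sum_of_subset_of_nonneg
    · simpa using hN
    · intros; positivity
  refine h2.trans ?_
  have h3 : ∑ i ∈ Finset.range N, 2 / ((i : ℝ) + 1) = 2 * ((harmonic N : ℚ) : ℝ) := by
    simp [harmonic, Finset.mul_sum, div_eq_mul_inv]
  rw [h3]; linarith

lemma exists_size (k : ℕ) (ε : ℝ) (hε : 0 < ε) :
    ∃ n : ℕ, 2 * (1 + Real.log (((n + 1) ^ k : ℕ) : ℝ)) ≤ ε * ((n : ℝ) + 1) := by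
  have h1 : (fun x : ℝ => 2 * (1 + k * Real.log x)) =o[Filter.atTop] (id : ℝ → ℝ) := by
    apply Asymptotics.IsLittleO.const_mul_left
    apply Asymptotics.IsLittleO.add
    · exact Asymptotics.isLittleO_const_id_atTop _
    · exact Real.isLittleO_log_id_atTop.const_mul_left _
  have h2 := h1.bound hε
  have h3 : Filter.Tendsto (fun n : ℕ => (n : ℝ) + 1) Filter.atTop Filter.atTop :=
    Filter.tendsto_atTop_add_const_right _ _ tendsto_natCast_atTop_atTop
  obtain ⟨n, hn⟩ := (h3.eventually h2).exists
  refine ⟨n, ?_⟩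
  push_cast
  rw [Real.log_pow]
  have h4 : (0 : ℝ) ≤ (n : ℝ) + 1 := by positivity
  simp only [id, Real.norm_of_nonneg h4] at hn
  exact (le_abs_self _).trans hn

/-- Some hyperplane orthogonal to coordinate `i` is light. -/
lemma exists_hyperplane (k n : ℕ) (ε : ℝ)
    (hn : 2 * (1 + Real.log (((n + 1) ^ k : ℕ) : ℝ)) ≤ ε * ((n : ℝ) + 1))
    (f : (Fin k → Fin (n + 1)) → ℕ) (hf : Function.Injective f) (i : Fin k) :
    ∃ a : Fin (n + 1), ∑ x with x i = a, (1 : ℝ) / (f x : ℝ) ≤ ε := by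
  by_contra! h
  have h1 : ∑ a : Fin (n + 1), ε < ∑ a : Fin (n + 1), ∑ x with x i = a, (1 : ℝ) / (f x : ℝ) :=
    Finset.sum_lt_sum_of_nonempty Finset.univ_nonempty (fun a _ => h a)
  rw [Finset.sum_fiberwise] at h1
  have h2 := sum_inv_le_log (Finset.univ.image f) ((n + 1) ^ k)
    (Finset.card_image_le.trans (by simp))
  rw [Finset.sum_image (fun x _ y _ h => hf h)] at h2
  simp at h1 h2 hn
  linarith

theorem exists_cross (k : ℕ) : ∃ n : ℕ, ∀ f : (Fin k → Fin (n + 1)) → ℕ, Function.Injective f →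
    ∃ a : Fin k → Fin (n + 1), ∑ x with ∃ i, x i = a i, (1 : ℝ) / (f x : ℝ) ≤ (1 / 2) ^ k := by
  obtain ⟨n, hn⟩ := exists_size k ((1 / 2) ^ k / (k + 1)) (by positivity)
  refine ⟨n, fun f hf => ?_⟩
  choose a ha using exists_hyperplane k n _ hn f hf
  refine ⟨a, ?_⟩
  calc ∑ x with ∃ i, x i = a i, (1 : ℝ) / (f x : ℝ)
      ≤ ∑ x, ∑ i, if x i = a i then (1 : ℝ) / (f x : ℝ) else 0 := by
        rw [Finset.sum_filter]
        refine Finset.sum_le_sum fun x _ => ?_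
        have hnn : ∀ i ∈ Finset.univ, 0 ≤ if x i = a i then (1 : ℝ) / (f x : ℝ) else 0 := by
          intro i _
          split_ifs <;> positivity
        split_ifs with h
        · obtain ⟨i, hi⟩ := h
          have := Finset.single_le_sum hnn (Finset.mem_univ i)
          rwa [if_pos hi] at this
        · exact Finset.sum_nonneg hnn
    _ = ∑ i, ∑ x with x i = a i, (1 : ℝ) / (f x : ℝ) := by
        rw [Finset.sum_comm]
        simp_rw [Finset.sum_filter]
    _ ≤ ∑ i : Fin k, ((1 : ℝ) / 2) ^ k / (k + 1) := Finset.sum_le_sum fun i _ => ha i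
    _ ≤ (1 / 2) ^ k := by
        simp only [Finset.sum_const, Finset.card_univ, Fintype.card_fin, nsmul_eq_mul]
        rw [mul_div_assoc', div_le_iff₀ (by positivity)]
        have : (0 : ℝ) < (1 / 2) ^ k := by positivity
        nlinarith

/-- There exists a free ultrafilter `U` on ℕ such that for every one-to-one
function `f : ℕ → ℕ` there is a set `A ∈ U` with `f '' A` in the summable ideal. -/
theorem exists_summable_ultrafilter :
    ∃ U : Ultrafilter ℕ, IsFreeUltrafilter U ∧
      ∀ f : ℕ → ℕ, Function.Injective f →
        ∃ A ∈ U, MemSummableIdeal (f '' A) := by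
  classical
  choose n hn using exists_cross
  let X := Σ k : ℕ, (Fin k → Fin (n k + 1))
  obtain ⟨e, he⟩ := exists_injective_nat X
  let I := {f : X → ℕ // Function.Injective f}
  have key : ∀ (f : I) (k : ℕ), ∃ a : Fin k → Fin (n k + 1),
      ∑ x with ∃ i, x i = a i, (1 : ℝ) / (f.1 ⟨k, x⟩ : ℝ) ≤ (1 / 2) ^ k := fun f k =>
    hn k (fun x => f.1 ⟨k, x⟩) (f.2.comp sigma_mk_injective)
  choose a ha using key
  let A : I → Set X := fun f => {p | ∃ i, p.2 i = a f p.1 i}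
  let G : I × ℕ → Set X := fun q => A q.1 ∩ {p | q.2 ≤ p.1}
  have hne : (Filter.generate (Set.range G)).NeBot := by
    rw [Filter.generate_neBot_iff]
    intro t ht htf
    have : Nonempty (I × ℕ) := ⟨(⟨e, he⟩, 0)⟩
    have ht' : ∀ s, s ∈ t → ∃ q, G q = s := fun s hs => ht hs
    choose! q hq using ht'
    have : Finite t := htf
    have : Fintype t := Fintype.ofFinite t
    obtain ⟨M, hM⟩ := (htf.image fun s => (q s).2).bddAbove
    let k := max (Fintype.card t) M
    obtain ⟨j⟩ : Nonempty (t ↪ Fin k) :=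
      Function.Embedding.nonempty_of_card_le (by simp [k])
    refine ⟨⟨k, Function.extend j (fun s => a (q s).1 k (j s)) 0⟩, ?_⟩
    intro s hs
    rw [← hq s hs]
    refine ⟨⟨j ⟨s, hs⟩, ?_⟩, ?_⟩
    · exact j.injective.extend_apply (fun s : t => a (q s).1 k (j s)) 0 ⟨s, hs⟩
    · exact (hM ⟨s, hs, rfl⟩).trans (le_max_right _ _)
  let V := @Ultrafilter.of _ _ hne
  have hV : ∀ q, G q ∈ V := fun q =>
    (@Ultrafilter.of_le _ _ hne) (Filter.mem_generate_of_mem ⟨q, rfl⟩)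
  refine ⟨V.map e, ?_, ?_⟩
  · intro s hs hsV
    rw [Ultrafilter.mem_map] at hsV
    have hfin : (e ⁻¹' s).Finite := hs.preimage he.injOn
    obtain ⟨m, hm⟩ := (hfin.image Sigma.fst).bddAbove
    have h1 := Filter.inter_mem hsV (hV (⟨e, he⟩, m + 1))
    obtain ⟨p, hp1, hp2⟩ := V.nonempty_of_mem h1
    have h2 : p.1 ≤ m := hm ⟨p, hp1, rfl⟩
    have h3 : m + 1 ≤ p.1 := hp2.2
    omega
  · intro f hf
    let g : I := ⟨f ∘ e, hf.comp he⟩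
    refine ⟨e '' A g, ?_, ?_⟩
    · rw [Ultrafilter.mem_map]
      exact Filter.mem_of_superset (hV (g, 0))
        (fun p hp => ⟨p, hp.1, rfl⟩)
    · have hs : Summable ((A g).indicator fun p => (1 : ℝ) / (g.1 p : ℝ)) := by
        have h0 : ∀ p, 0 ≤ (A g).indicator (fun p => (1 : ℝ) / (g.1 p : ℝ)) p := fun p =>
          Set.indicator_nonneg (fun p _ => by positivity) p
        rw [summable_sigma_of_nonneg h0]
        refine ⟨fun k => Summable.of_finite, ?_⟩
        refine Summable.of_nonneg_of_le (fun k => tsum_nonneg fun x => h0 _) (fun k => ?_)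
          (summable_geometric_of_lt_one (r := (1 / 2 : ℝ)) (by norm_num) (by norm_num))
        rw [tsum_fintype]
        refine le_trans (le_of_eq ?_) (ha g k)
        rw [Finset.sum_filter]
        refine Finset.sum_congr rfl fun x _ => ?_
        simp only [Set.indicator_apply, A, Set.mem_ofPred_eq]
      rw [← summable_subtype_iff_indicator] at hs
      unfold MemSummableIdeal
      rw [Set.image_image]
      exact (Equiv.Set.image g.1 (A g) g.2).summable_iff.1 hs
end

section
/- There exists a 0-point, i.e., a free ultrafilter U on the natural numbers such that for every one-to-one function f : ℕ → ℕ there exists a set A ∈ U with f[A] of asymptotic density zero. -/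
/-- `A` has asymptotic density zero: `limsup_{n→∞} |A ∩ [1,n]| / n = 0`. -/
def HasDensityZero (A : Set ℕ) : Prop :=
  Filter.limsup (fun n : ℕ => (Nat.card ↥(A ∩ Set.Icc 1 n) : ℝ) / (n : ℝ))
    Filter.atTop = 0

open Filter Topology

/-- A finite set of naturals of size `N` has reciprocal sum at most `2 + log N`. -/
lemma sum_inv_le_log_s1 {ι : Type*} (P : Finset ι) (g : ι → ℕ) (hg : Function.Injective g) :
    ∑ s ∈ P, ((g s : ℝ))⁻¹ ≤ 2 + Real.log P.card := by
  classical
  set N := P.card with hN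
  have h1 : ∑ s ∈ P with g s ≤ N, ((g s : ℝ))⁻¹ ≤ 1 + Real.log N := by
    have hh : ∑ i ∈ Finset.Icc 1 N, ((i : ℝ))⁻¹ ≤ 1 + Real.log N := by
      have := harmonic_le_one_add_log N
      rw [harmonic_eq_sum_Icc] at this
      push_cast at this
      exact this
    refine le_trans ?_ hh
    rw [← Finset.sum_image (s := P.filter (fun s => g s ≤ N)) (g := g)
      (f := fun i : ℕ => ((i : ℝ))⁻¹) (fun a _ b _ h => hg h)]
    rw [← Finset.sum_filter_add_sum_filter_not _ (fun i => i = 0)]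
    rw [Finset.sum_eq_zero (s := Finset.filter (fun i => i = 0) _)]
    · rw [zero_add]
      apply Finset.sum_le_sum_of_subset_of_nonneg
      · intro i hi
        simp only [Finset.mem_filter, Finset.mem_image] at hi
        obtain ⟨⟨a, ⟨_, h2⟩, rfl⟩, h3⟩ := hi
        simp only [Finset.mem_Icc]
        omega
      · intros; positivity
    · intro i hi
      have := (Finset.mem_filter.1 hi).2
      simp [this]
  have h2 : ∑ s ∈ P with ¬ g s ≤ N, ((g s : ℝ))⁻¹ ≤ 1 := by
    rcases Nat.eq_zero_or_pos N with h0 | h0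
    · have : P = ∅ := Finset.card_eq_zero.1 (by omega)
      simp [this]
    · calc ∑ s ∈ P with ¬ g s ≤ N, ((g s : ℝ))⁻¹
          ≤ ∑ s ∈ P with ¬ g s ≤ N, ((N : ℝ))⁻¹ := by
            apply Finset.sum_le_sum
            intro s hs
            have := (Finset.mem_filter.1 hs).2
            apply inv_anti₀
            · exact_mod_cast h0
            · exact_mod_cast (by omega : N ≤ g s)
        _ ≤ ∑ s ∈ P, ((N : ℝ))⁻¹ := by
            apply Finset.sum_le_sum_of_subset_of_nonneg (Finset.filter_subset _ _)
            intros; positivity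
        _ = 1 := by
            rw [Finset.sum_const, ← hN, nsmul_eq_mul]
            have : (N : ℝ) ≠ 0 := by positivity
            field_simp
  rw [← Finset.sum_filter_add_sum_filter_not P (fun s => g s ≤ N)]
  linarith

/-- The finite combinatorial core. -/
lemma finite_core (k : ℕ) (ε : ℝ) (hε : 0 < ε) :
    ∃ q : ℕ, k ≤ q ∧ ∀ g : Finset ℕ → ℕ, Function.Injective g →
      ∃ i < q, ∑ s ∈ (Finset.powersetCard k (Finset.range q)) with i ∈ s,
        ((g s : ℝ))⁻¹ ≤ ε := by
  have hlim : Tendsto (fun q : ℕ => (k : ℝ) * (2 * (q : ℝ)⁻¹ + k * (Real.log q / q))) atTop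
      (𝓝 (k * (2 * 0 + k * 0))) := by
    have hl : Tendsto (fun q : ℕ => Real.log q / (q : ℝ)) atTop (𝓝 0) :=
      (Real.isLittleO_log_id_atTop.tendsto_div_nhds_zero).comp tendsto_natCast_atTop_atTop
    exact ((tendsto_inv_atTop_nhds_zero_nat.const_mul 2).add (hl.const_mul _)).const_mul _
  have hev := hlim.eventually_lt_const (u := ε) (by simpa using hε)
  obtain ⟨q, h1, h2, h3⟩ := (hev.and ((eventually_ge_atTop k).and (eventually_ge_atTop 1))).exists
  refine ⟨q, h2, fun g hg => ?_⟩
  by_contra! hcon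
  have hq : (0 : ℝ) < q := by exact_mod_cast h3
  have ha : (q : ℝ) * ε ≤ ∑ i ∈ Finset.range q,
      ∑ s ∈ (Finset.powersetCard k (Finset.range q)) with i ∈ s, ((g s : ℝ))⁻¹ := by
    calc (q : ℝ) * ε = ∑ i ∈ Finset.range q, ε := by simp
      _ ≤ _ := Finset.sum_le_sum fun i hi => (hcon i (Finset.mem_range.1 hi)).le
  have hb : ∑ i ∈ Finset.range q,
      ∑ s ∈ (Finset.powersetCard k (Finset.range q)) with i ∈ s, ((g s : ℝ))⁻¹
      = k * ∑ s ∈ (Finset.powersetCard k (Finset.range q)), ((g s : ℝ))⁻¹ := by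
    simp_rw [Finset.sum_filter]
    rw [Finset.sum_comm, Finset.mul_sum]
    apply Finset.sum_congr rfl
    intro s hs
    rw [Finset.mem_powersetCard] at hs
    rw [← Finset.sum_filter, Finset.sum_const, nsmul_eq_mul]
    congr 2
    rw [Finset.filter_mem_eq_inter, Finset.inter_eq_right.2 hs.1, hs.2]
  have hc := sum_inv_le_log_s1 (Finset.powersetCard k (Finset.range q)) g hg
  rw [Finset.card_powersetCard, Finset.card_range] at hc
  have hd : Real.log (q.choose k) ≤ k * Real.log q := by
    rw [← Real.log_pow]
    apply Real.log_le_log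
    · exact_mod_cast Nat.choose_pos h2
    · exact_mod_cast Nat.choose_le_pow q k
  have he : (q : ℝ) * ε ≤ k * (2 + k * Real.log q) := by
    rw [hb] at ha
    refine ha.trans (mul_le_mul_of_nonneg_left (by linarith) (by positivity))
  have hf : (k : ℝ) * (2 * (q : ℝ)⁻¹ + k * (Real.log q / q)) = k * (2 + k * Real.log q) / q := by
    field_simp
  rw [hf, div_lt_iff₀ hq] at h1
  linarith

/-- Summable reciprocals imply density zero. -/
lemma density_zero_of_summable {ι : Type*} (g : ι → ℕ) (hg : Function.Injective g) (A : Set ι)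
    (hs : Summable (A.indicator fun s => ((g s : ℝ))⁻¹)) : HasDensityZero (g '' A) := by
  classical
  unfold HasDensityZero
  apply Tendsto.limsup_eq
  rw [Metric.tendsto_atTop]
  intro ε hε
  obtain ⟨F, hF⟩ := summable_iff_vanishing_norm.1 hs (ε / 2) (by positivity)
  obtain ⟨M, hM⟩ := exists_nat_gt ((F.card : ℝ) / (ε / 2))
  refine ⟨M + 1, fun m hm => ?_⟩
  have hm0 : (0 : ℝ) < m := by exact_mod_cast (by omega : 0 < m)
  have hfin : (A ∩ g ⁻¹' (Set.Icc 1 m)).Finite :=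
    ((Set.finite_Icc 1 m).preimage hg.injOn).subset Set.inter_subset_right
  set D := hfin.toFinset with hD
  have himg : g '' A ∩ Set.Icc 1 m = g '' (D : Set ι) := by
    rw [hD, Set.Finite.coe_toFinset, Set.image_inter_preimage]
  have hcard : Nat.card ↥(g '' A ∩ Set.Icc 1 m) = D.card := by
    rw [himg, Nat.card_image_of_injective hg]
    simp
  have h1 : ((D \ F).card : ℝ) ≤ m * (ε / 2) := by
    have h2 := hF (D \ F) Finset.sdiff_disjoint
    have h3 : ((D \ F).card : ℝ) * (m : ℝ)⁻¹ ≤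
        ∑ s ∈ D \ F, A.indicator (fun s => ((g s : ℝ))⁻¹) s := by
      rw [← nsmul_eq_mul, ← Finset.sum_const]
      apply Finset.sum_le_sum
      intro s hs
      have hs' : s ∈ D := (Finset.mem_sdiff.1 hs).1
      rw [hD, Set.Finite.mem_toFinset] at hs'
      obtain ⟨hA, h5, h6⟩ := hs'
      rw [Set.indicator_of_mem hA]
      apply inv_anti₀
      · exact_mod_cast h5
      · exact_mod_cast h6
    have h4 := (h3.trans (le_abs_self _)).trans h2.le
    rw [← div_eq_mul_inv, div_le_iff₀ hm0] at h4
    linarith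
  have h2 : (D.card : ℝ) ≤ F.card + (D \ F).card := by
    have : D.card ≤ F.card + (D \ F).card := by
      rw [← Finset.card_union_of_disjoint Finset.disjoint_sdiff]
      apply Finset.card_le_card
      intro x hx
      by_cases h : x ∈ F <;> simp [h, hx]
    exact_mod_cast this
  rw [hcard, Real.dist_eq, sub_zero, abs_of_nonneg (by positivity), div_lt_iff₀ hm0]
  rw [div_lt_iff₀ (by positivity)] at hM
  have hMm : (M : ℝ) < m := by exact_mod_cast (by omega : M < m)
  nlinarith

/-- There exists a 0-point: a free ultrafilter `U` on ℕ such that for every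
one-to-one function `f : ℕ → ℕ` there is a set `A ∈ U` with `f '' A` of
asymptotic density zero. -/
theorem exists_zero_point :
    ∃ U : Ultrafilter ℕ, IsFreeUltrafilter U ∧
      ∀ f : ℕ → ℕ, Function.Injective f →
        ∃ A ∈ U, HasDensityZero (f '' A) := by
  classical
  choose q hkq hq using fun n : ℕ => finite_core n ((1 / 2 : ℝ) ^ n) (by positivity)
  choose i hiq hi using hq
  let G := {g : Finset ℕ → ℕ // Function.Injective g}
  let A : G × ℕ → Set (Finset ℕ) := fun p =>
    {s | p.2 ≤ s.card ∧ s ⊆ Finset.range (q s.card) ∧ i s.card p.1.1 p.1.2 ∈ s}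
  obtain ⟨V, hV⟩ := Ultrafilter.exists_ultrafilter_of_finite_inter_nonempty (Set.range A) (by
    intro T hT
    obtain ⟨P, rfl⟩ : ∃ P : Finset (G × ℕ), P.image A = T := by
      obtain ⟨P, _, hP⟩ := Finset.subset_set_image_iff.1 (by rwa [← Set.image_univ] at hT)
      exact ⟨P, hP⟩
    set n := max P.card (P.sup Prod.snd) with hn
    obtain ⟨s, hs1, hs2, hs3⟩ := Finset.exists_subsuperset_card_eq
      (s := P.image fun p : G × ℕ => i n p.1.1 p.1.2) (t := Finset.range (q n)) (n := n)
      (by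
        intro x hx
        obtain ⟨p, _, rfl⟩ := Finset.mem_image.1 hx
        exact Finset.mem_range.2 (hiq n _ _))
      (Finset.card_image_le.trans (le_max_left _ _))
      (by simpa using hkq n)
    refine ⟨s, ?_⟩
    rintro _ hB
    obtain ⟨p, hp, rfl⟩ := Finset.mem_image.1 (Finset.mem_coe.1 hB)
    refine ⟨?_, ?_, ?_⟩
    · rw [hs3]
      exact (Finset.le_sup (f := Prod.snd) hp).trans (le_max_right _ _)
    · rw [hs3]; exact hs2
    · rw [hs3]; exact hs1 (Finset.mem_image_of_mem _ hp))
  have hA : ∀ p, A p ∈ V := fun p => hV ⟨p, rfl⟩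
  have henc : Function.Injective (Encodable.encode : Finset ℕ → ℕ) := Encodable.encode_injective
  refine ⟨V.map Encodable.encode, ?_, ?_⟩
  · intro s hs hmem
    rw [Ultrafilter.mem_map] at hmem
    have hfin := hs.preimage (f := (Encodable.encode : Finset ℕ → ℕ)) henc.injOn
    set j := hfin.toFinset.sup Finset.card + 1 with hj
    obtain ⟨x, hx1, hx2⟩ := V.nonempty_of_mem
      (inter_mem hmem (hA (⟨Encodable.encode, henc⟩, j)))
    have h1 : x.card ≤ hfin.toFinset.sup Finset.card :=
      Finset.le_sup (f := Finset.card) (hfin.mem_toFinset.2 hx1)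
    have h2 : j ≤ x.card := hx2.1
    omega
  · intro f hf
    let g : G := ⟨f ∘ Encodable.encode, hf.comp henc⟩
    refine ⟨Encodable.encode '' A (g, 0), ?_, ?_⟩
    · rw [Ultrafilter.mem_map, Set.preimage_image_eq _ henc]
      exact hA _
    · rw [← Set.image_comp]
      apply density_zero_of_summable g.1 g.2
      apply summable_of_sum_le (c := 2)
      · intro s
        apply Set.indicator_nonneg
        intros; positivity
      · intro u
        set N := u.sup Finset.card + 1 with hN
        rw [← Finset.sum_fiberwise_of_maps_to (s := u) (t := Finset.range N) (g := Finset.card)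
          (fun s hs => Finset.mem_range.2 (Nat.lt_succ_of_le (Finset.le_sup (f := Finset.card) hs)))]
        calc _ ≤ ∑ n ∈ Finset.range N, ((1 / 2 : ℝ)) ^ n := by
              apply Finset.sum_le_sum
              intro n _
              refine le_trans ?_ (hi n g.1 g.2)
              simp only [Set.indicator_apply]
              rw [← Finset.sum_filter]
              apply Finset.sum_le_sum_of_subset_of_nonneg
              · intro s hs
                simp only [Finset.mem_filter] at hs
                obtain ⟨⟨_, hc⟩, _, h2, h3⟩ := hs
                subst hc
                exact Finset.mem_filter.2 ⟨Finset.mem_powersetCard.2 ⟨h2, rfl⟩, h3⟩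
              · intros; positivity
          _ ≤ 2 := sum_geometric_two_le N
end

section
/- A free ultrafilter U on ℕ is a thin ultrafilter if and only if it is an almost-thin ultrafilter; that is, for every function f : ℕ → ℕ there is A ∈ U with f[A] thin or finite if and only if for every function f : ℕ → ℕ there is A ∈ U with f[A] almost thin or finite. -/
/-- An infinite set `A ⊆ ℕ`, with increasing enumeration `a₀ < a₁ < ⋯` given by
`Nat.nth`, is thin if `aₙ / aₙ₊₁ → 0`. -/
def IsThin (A : Set ℕ) : Prop :=
  A.Infinite ∧
    Filter.Tendsto
      (fun n : ℕ => (Nat.nth (· ∈ A) n : ℝ) / (Nat.nth (· ∈ A) (n + 1) : ℝ))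
      Filter.atTop (nhds 0)

/-- An infinite set `A ⊆ ℕ`, with increasing enumeration `a₀ < a₁ < ⋯` given by
`Nat.nth`, is almost thin if `limsup aₙ / aₙ₊₁ < 1`. -/
def IsAlmostThin (A : Set ℕ) : Prop :=
  A.Infinite ∧
    Filter.limsup
      (fun n : ℕ => (Nat.nth (· ∈ A) n : ℝ) / (Nat.nth (· ∈ A) (n + 1) : ℝ))
      Filter.atTop < 1

lemma nth_lt_succ {A : Set ℕ} (hA : A.Infinite) (n : ℕ) :
    Nat.nth (· ∈ A) n < Nat.nth (· ∈ A) (n + 1) :=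
  Nat.nth_strictMono (p := (· ∈ A)) hA (Nat.lt_succ_self n)

lemma almost_thin_seq {A : Set ℕ} (h : IsAlmostThin A) :
    ∃ q : ℝ, 0 < q ∧ q < 1 ∧ ∃ N : ℕ, ∀ n, N ≤ n →
      (Nat.nth (· ∈ A) n : ℝ) ≤ q * (Nat.nth (· ∈ A) (n + 1) : ℝ) := by
  obtain ⟨hA, hl⟩ := h
  obtain ⟨q, hq1, hq2⟩ := exists_between hl
  have hb : Filter.IsBoundedUnder (· ≤ ·) Filter.atTop
      (fun n : ℕ => (Nat.nth (· ∈ A) n : ℝ) / (Nat.nth (· ∈ A) (n + 1) : ℝ)) := by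
    refine Filter.isBoundedUnder_of ⟨1, fun n => ?_⟩
    apply div_le_one_of_le₀
    · exact_mod_cast (nth_lt_succ hA n).le
    · positivity
  have he := Filter.eventually_lt_of_limsup_lt hq1 hb
  obtain ⟨N, hN⟩ := Filter.eventually_atTop.1 he
  refine ⟨max q (1/2), by positivity, max_lt hq2 (by norm_num), N, fun n hn => ?_⟩
  have hpos : (0 : ℝ) < (Nat.nth (· ∈ A) (n + 1) : ℝ) := by
    exact_mod_cast lt_of_le_of_lt (Nat.zero_le _) (nth_lt_succ hA n)
  have h1 := (div_lt_iff₀ hpos).1 (hN n hn)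
  have h2 := mul_le_mul_of_nonneg_right (le_max_left q (1/2)) hpos.le
  linarith

lemma seq_pow {a : ℕ → ℕ} {q : ℝ} (hq : 0 < q) {N : ℕ}
    (h : ∀ n, N ≤ n → (a n : ℝ) ≤ q * (a (n + 1) : ℝ)) (n : ℕ) (hn : N ≤ n) (k : ℕ) :
    (a n : ℝ) ≤ q ^ k * (a (n + k) : ℝ) := by
  induction k with
  | zero => simp
  | succ k ih =>
    have h1 := mul_le_mul_of_nonneg_left (h (n + k) (by omega)) (pow_pos hq k).le
    rw [pow_succ, mul_assoc]
    exact ih.trans h1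

lemma almost_thin_set {A : Set ℕ} (h : IsAlmostThin A) :
    ∃ q : ℝ, 0 < q ∧ q < 1 ∧ ∃ N : ℕ, ∀ x ∈ A, ∀ y ∈ A, N ≤ x → x < y →
      (x : ℝ) ≤ q * y := by
  classical
  obtain ⟨q, hq, hq1, N, hN⟩ := almost_thin_seq h
  have hA := h.1
  refine ⟨q, hq, hq1, Nat.nth (· ∈ A) N, fun x hx y hy hNx hxy => ?_⟩
  have ex := Nat.nth_count (p := (· ∈ A)) hx
  have ey := Nat.nth_count (p := (· ∈ A)) hy
  have hc : N ≤ Nat.count (· ∈ A) x := by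
    rw [← ex] at hNx
    exact (Nat.nth_le_nth (p := (· ∈ A)) hA).1 hNx
  have hlt : Nat.count (· ∈ A) x + 1 ≤ Nat.count (· ∈ A) y :=
    Nat.count_strict_mono (p := (· ∈ A)) hx hxy
  have h1 := hN _ hc
  have h2 := (Nat.nth_le_nth (p := (· ∈ A)) hA).2 hlt
  rw [ey] at h2
  rw [ex] at h1
  have h3 : ((Nat.nth (· ∈ A) (Nat.count (· ∈ A) x + 1) : ℕ) : ℝ) ≤ y := by exact_mod_cast h2
  exact h1.trans (mul_le_mul_of_nonneg_left h3 hq.le)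

lemma thin_of_set {S : Set ℕ} (hS : S.Infinite)
    (h : ∀ ε : ℝ, 0 < ε → ∃ N : ℕ, ∀ x ∈ S, ∀ y ∈ S, N ≤ x → x < y → (x : ℝ) ≤ ε * y) :
    IsThin S := by
  refine ⟨hS, ?_⟩
  rw [Metric.tendsto_atTop]
  intro ε hε
  obtain ⟨N, hN⟩ := h (ε / 2) (by positivity)
  refine ⟨N, fun n hn => ?_⟩
  have hlt := nth_lt_succ hS n
  have hpos : (0 : ℝ) < (Nat.nth (· ∈ S) (n + 1) : ℝ) := by
    exact_mod_cast lt_of_le_of_lt (Nat.zero_le _) hlt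
  have h1 := hN _ (Nat.nth_mem_of_infinite (p := (· ∈ S)) hS n) _
    (Nat.nth_mem_of_infinite (p := (· ∈ S)) hS (n + 1))
    (hn.trans ((Nat.nth_strictMono (p := (· ∈ S)) hS).id_le n)) hlt
  have h2 := (div_le_iff₀ hpos).2 h1
  rw [Real.dist_eq, sub_zero, abs_of_nonneg (by positivity)]
  linarith

lemma thin_of_index {B D S : Set ℕ} [DecidablePred (· ∈ B)] (hB : IsAlmostThin B)
    (hD : IsAlmostThin D) (hSB : S ⊆ B) (hSD : ∀ x ∈ S, Nat.count (· ∈ B) x ∈ D)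
    (hS : S.Infinite) : IsThin S := by
  obtain ⟨q, hq, hq1, N, hN⟩ := almost_thin_seq hB
  obtain ⟨r, hr, hr1, M, hM⟩ := almost_thin_set hD
  refine thin_of_set hS fun ε hε => ?_
  obtain ⟨k, hk⟩ := exists_pow_lt_of_lt_one hε hq1
  obtain ⟨L, hL⟩ := exists_nat_ge ((k : ℝ) / (1 - r))
  refine ⟨Nat.nth (· ∈ B) (max N (max M L)), fun x hx y hy hNx hxy => ?_⟩
  have ex := Nat.nth_count (p := (· ∈ B)) (hSB hx)
  have ey := Nat.nth_count (p := (· ∈ B)) (hSB hy)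
  have hc : max N (max M L) ≤ Nat.count (· ∈ B) x := by
    rw [← ex] at hNx
    exact (Nat.nth_le_nth (p := (· ∈ B)) hB.1).1 hNx
  have hlt : Nat.count (· ∈ B) x < Nat.count (· ∈ B) y :=
    Nat.count_strict_mono (p := (· ∈ B)) (hSB hx) hxy
  have hd := hM _ (hSD x hx) _ (hSD y hy) (by omega) hlt
  generalize Nat.count (· ∈ B) x = i at *
  generalize Nat.count (· ∈ B) y = j at *
  have hr' : 0 < 1 - r := by linarith
  have hkL : (k : ℝ) ≤ L * (1 - r) := (div_le_iff₀ hr').1 hL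
  have hLi : (L : ℝ) ≤ i := by exact_mod_cast (by omega : L ≤ i)
  have hij : (i : ℝ) ≤ j := by exact_mod_cast hlt.le
  have hgap : i + k ≤ j := by
    have : (i : ℝ) + k ≤ j := by nlinarith
    exact_mod_cast this
  have h1 := seq_pow hq hN i (by omega) k
  have h2 := (Nat.nth_le_nth (p := (· ∈ B)) hB.1).2 hgap
  rw [ey] at h2
  rw [ex] at h1
  have h3 : ((Nat.nth (· ∈ B) (i + k) : ℕ) : ℝ) ≤ y := by exact_mod_cast h2
  exact h1.trans (mul_le_mul hk.le h3 (by positivity) hε.le)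

/-- A free ultrafilter on ℕ is a thin ultrafilter iff it is an almost-thin
ultrafilter. -/
theorem thin_ultrafilter_iff_almost_thin_ultrafilter (U : Ultrafilter ℕ)
    (hfree : IsFreeUltrafilter U) :
    (∀ f : ℕ → ℕ, ∃ A ∈ U, IsThin (f '' A) ∨ (f '' A).Finite) ↔
      (∀ f : ℕ → ℕ, ∃ A ∈ U, IsAlmostThin (f '' A) ∨ (f '' A).Finite) := by
  classical
  constructor
  · intro h f
    obtain ⟨A, hA, h | h⟩ := h f
    · refine ⟨A, hA, Or.inl ⟨h.1, ?_⟩⟩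
      rw [h.2.limsup_eq]
      exact one_pos
    · exact ⟨A, hA, Or.inr h⟩
  · intro h f
    obtain ⟨A, hA, hB | hB⟩ := h f
    swap
    · exact ⟨A, hA, Or.inr hB⟩
    obtain ⟨A', hA', hD⟩ := h (fun n => Nat.count (· ∈ f '' A) (f n))
    refine ⟨A ∩ A', Filter.inter_mem hA hA', ?_⟩
    have hSB : f '' (A ∩ A') ⊆ f '' A := Set.image_mono Set.inter_subset_left
    have hSD : ∀ x ∈ f '' (A ∩ A'), Nat.count (· ∈ f '' A) x ∈
        (fun n => Nat.count (· ∈ f '' A) (f n)) '' A' := by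
      rintro _ ⟨n, hn, rfl⟩
      exact ⟨n, hn.2, rfl⟩
    by_cases hS : (f '' (A ∩ A')).Finite
    · exact Or.inr hS
    · rcases hD with hD | hD
      · exact Or.inl (thin_of_index hB hD hSB hSD hS)
      · refine Or.inr (Set.Finite.of_finite_image (hD.subset (Set.image_subset_iff.2 hSD)) ?_)
        intro x hx y hy hxy
        exact Nat.count_injective (p := (· ∈ f '' A)) (hSB hx) (hSB hy) hxy
end

section
/- If I is a P-ideal on ℕ containing all singletons and all finite sets, and U and V are I-ultrafilters, then the product U · V is again an I-ultrafilter; that is, for every function F : ℕ × ℕ → ℕ there exists a set M ∈ U · V such that F[M] ∈ I. -/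
/-- The product `U · V` of two ultrafilters on ℕ: an ultrafilter on ℕ × ℕ with
`M ∈ U · V` iff `{n : {m : (n, m) ∈ M} ∈ V} ∈ U`. -/
def ufProd (U V : Ultrafilter ℕ) : Ultrafilter (ℕ × ℕ) :=
  U.bind fun n => V.map fun m => (n, m)

/-- The defining property of the product ultrafilter. -/
theorem mem_ufProd (U V : Ultrafilter ℕ) (M : Set (ℕ × ℕ)) :
    M ∈ ufProd U V ↔ {n : ℕ | {m : ℕ | (n, m) ∈ M} ∈ V} ∈ U :=
  Iff.rfl

/-- If `I` is a P-ideal on ℕ containing all singletons and all finite sets,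
and `U`, `V` are `I`-ultrafilters, then `U · V` is again an `I`-ultrafilter. -/
theorem prod_of_I_ultrafilters_is_I_ultrafilter (I : Set (Set ℕ))
    (hsubset : ∀ A B : Set ℕ, A ⊆ B → B ∈ I → A ∈ I)
    (hunion : ∀ A B : Set ℕ, A ∈ I → B ∈ I → A ∪ B ∈ I)
    (hsingle : ∀ n : ℕ, {n} ∈ I)
    (hfin : ∀ A : Set ℕ, A.Finite → A ∈ I)
    (hP : ∀ A : ℕ → Set ℕ, (∀ n, A n ∈ I) → ∃ B ∈ I, ∀ n, (A n \ B).Finite)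
    (U V : Ultrafilter ℕ) (hUfree : IsFreeUltrafilter U)
    (hVfree : IsFreeUltrafilter V)
    (hU : ∀ f : ℕ → ℕ, ∃ A ∈ U, f '' A ∈ I)
    (hV : ∀ f : ℕ → ℕ, ∃ A ∈ V, f '' A ∈ I) :
    ∀ F : ℕ × ℕ → ℕ, ∃ M ∈ ufProd U V, F '' M ∈ I := by
  intro F
  choose A hA hAI using fun n => hV (fun m => F (n, m))
  obtain ⟨B, hB, hfinB⟩ := hP (fun n => (fun m => F (n, m)) '' A n) hAI
  have key : ∀ n, ∃ k, {m | F (n, m) ∈ B ∨ F (n, m) = k} ∈ V := by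
    intro n
    by_cases h : {m | F (n, m) ∈ B} ∈ V
    · exact ⟨0, Filter.mem_of_superset h fun m hm => Or.inl hm⟩
    · have hc := Ultrafilter.compl_mem_iff_notMem.mpr h
      have h2 : (⋃ k ∈ (fun m => F (n, m)) '' A n \ B, {m | F (n, m) = k}) ∈ V := by
        refine Filter.mem_of_superset (Filter.inter_mem (hA n) hc) ?_
        rintro m ⟨hm1, hm2⟩
        simp only [Set.mem_iUnion]
        exact ⟨F (n, m), ⟨⟨m, hm1, rfl⟩, hm2⟩, rfl⟩
      obtain ⟨k, -, hk⟩ := (Ultrafilter.finite_biUnion_mem_iff (hfinB n)).mp h2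
      exact ⟨k, Filter.mem_of_superset hk fun m hm => Or.inr hm⟩
  choose g hg using key
  obtain ⟨C, hC, hCI⟩ := hU g
  refine ⟨F ⁻¹' (B ∪ g '' C), ?_,
    hsubset _ _ (Set.image_preimage_subset _ _) (hunion _ _ hB hCI)⟩
  rw [mem_ufProd]
  refine Filter.mem_of_superset hC fun n hn => ?_
  refine Filter.mem_of_superset (hg n) ?_
  rintro m (hm | hm)
  · exact Or.inl hm
  · exact Or.inr ⟨n, hn, hm.symm⟩
end

section
/- For every free ultrafilter U on ℕ, the product U · U is not an (SC)-ultrafilter; that is, for any bijection e : ℕ × ℕ → ℕ, the image of U · U under e is not an (SC)-ultrafilter. -/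
/-- An infinite set `A ⊆ ℕ`, with increasing enumeration `a₀ < a₁ < ⋯` given by
`Nat.nth`, is an (SC)-set if `aₙ₊₁ - aₙ → ∞`. -/
def IsSCSet (A : Set ℕ) : Prop :=
  A.Infinite ∧
    Filter.Tendsto (fun n : ℕ => Nat.nth (· ∈ A) (n + 1) - Nat.nth (· ∈ A) n)
      Filter.atTop Filter.atTop

/-- A free ultrafilter `W` on ℕ is an (SC)-ultrafilter if for every `f : ℕ → ℕ`
there is `A ∈ W` with `f '' A` an (SC)-set or finite. -/
def IsSCUltrafilter (W : Ultrafilter ℕ) : Prop :=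
  ∀ f : ℕ → ℕ, ∃ A ∈ W, IsSCSet (f '' A) ∨ (f '' A).Finite

open Classical in
/-- In an (SC)-set every positive difference occurs only finitely often at translates. -/
theorem IsSCSet.finite_pairs {A : Set ℕ} (hA : IsSCSet A) (d : ℕ) (hd : 0 < d) :
    {x : ℕ | x ∈ A ∧ x + d ∈ A}.Finite := by
  obtain ⟨hinf, ht⟩ := hA
  obtain ⟨N, hN⟩ := Filter.eventually_atTop.1 (ht.eventually_gt_atTop d)
  refine ((Set.finite_Iio N).image (Nat.nth (· ∈ A))).subset ?_
  rintro x ⟨hx, hxd⟩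
  have h1 : Nat.nth (· ∈ A) (Nat.count (· ∈ A) x) = x := Nat.nth_count hx
  have h2 : Nat.nth (· ∈ A) (Nat.count (· ∈ A) (x + d)) = x + d :=
    Nat.nth_count (p := (· ∈ A)) hxd
  refine ⟨Nat.count (· ∈ A) x, ?_, h1⟩
  by_contra hc
  have h3 := hN _ (not_lt.1 hc)
  have h4 : Nat.count (· ∈ A) x < Nat.count (· ∈ A) (x + d) :=
    Nat.count_strict_mono (p := (· ∈ A)) hx (by omega)
  have h5 : Nat.nth (· ∈ A) (Nat.count (· ∈ A) x + 1) ≤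
      Nat.nth (· ∈ A) (Nat.count (· ∈ A) (x + d)) :=
    Nat.nth_monotone (p := (· ∈ A)) hinf h4
  omega

/-- For every free ultrafilter `U` on ℕ, the product `U · U` (copied to ℕ via
any bijection `e : ℕ × ℕ → ℕ`) is not an (SC)-ultrafilter. -/
theorem prod_not_SC_ultrafilter (U : Ultrafilter ℕ) (hfree : IsFreeUltrafilter U)
    (e : ℕ × ℕ → ℕ) (he : Function.Bijective e) :
    ¬ IsSCUltrafilter (Ultrafilter.map e (ufProd U U)) := by
  intro h
  obtain ⟨g, hg⟩ := he.injective.hasLeftInverse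
  have hinf : ∀ s ∈ U, s.Infinite := fun s hs hf => hfree s hf hs
  obtain ⟨A, hA, hA'⟩ := h fun k => (g k).1 + (g k).2
  have hM : e ⁻¹' A ∈ ufProd U U := hA
  rw [mem_ufProd] at hM
  have hmem : ∀ n m, e (n, m) ∈ A → n + m ∈ (fun k => (g k).1 + (g k).2) '' A :=
    fun n m hnm => ⟨e (n, m), hnm, by simp only [hg (n, m)]⟩
  obtain ⟨a, ha⟩ := (hinf _ hM).nonempty
  obtain ⟨b, hb, hab⟩ := (hinf _ hM).exists_gt a
  have hI := hinf _ (Filter.inter_mem (f := (U : Filter ℕ)) ha hb)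
  have hJ := hI.image (f := fun m => a + m) (fun x _ y _ hxy => Nat.add_left_cancel hxy)
  rcases hA' with hS | hF
  · refine hJ ((hS.finite_pairs (b - a) (by omega)).subset ?_)
    rintro _ ⟨m, ⟨h1, h2⟩, rfl⟩
    refine ⟨hmem a m h1, ?_⟩
    have : a + m + (b - a) = b + m := by omega
    simp only [this]
    exact hmem b m h2
  · refine hJ (hF.subset ?_)
    rintro _ ⟨m, ⟨h1, h2⟩, rfl⟩
    exact hmem a m h1
end

section
/- For every free ultrafilter U on ℕ, the product U · U is not a thin ultrafilter; that is, for any bijection e : ℕ × ℕ → ℕ, the image of U · U under e is not a thin ultrafilter. -/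
/-- A free ultrafilter `W` on ℕ is a thin ultrafilter if for every `f : ℕ → ℕ`
there is `A ∈ W` with `f '' A` thin or finite. -/
def IsThinUltrafilter (W : Ultrafilter ℕ) : Prop :=
  ∀ f : ℕ → ℕ, ∃ A ∈ W, IsThin (f '' A) ∨ (f '' A).Finite

theorem not_thin_aux (B : Set ℕ)
    (h : ∀ N : ℕ, ∃ x ∈ B, N ≤ x ∧ ∃ y ∈ B, x < y ∧ y ≤ 2 * x) :
    ¬ (IsThin B ∨ B.Finite) := by
  classical
  rintro (⟨hinf, ht⟩ | hfin)
  · have h1 := ht.eventually (gt_mem_nhds (show (0 : ℝ) < 1 / 2 by norm_num))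
    obtain ⟨N, hN⟩ := Filter.eventually_atTop.1 h1
    have hinf' : (setOf (· ∈ B)).Infinite := hinf
    obtain ⟨x, hx, hNx, y, hy, hxy, hyx⟩ := h (Nat.nth (· ∈ B) N)
    have hk : Nat.nth (· ∈ B) (Nat.count (· ∈ B) x) = x := Nat.nth_count hx
    have hl : Nat.nth (· ∈ B) (Nat.count (· ∈ B) y) = y := Nat.nth_count hy
    have hNk : N ≤ Nat.count (· ∈ B) x := by
      rw [← Nat.nth_le_nth hinf', hk]; exact hNx
    have hkl : Nat.count (· ∈ B) x < Nat.count (· ∈ B) y := by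
      rw [← Nat.nth_lt_nth hinf', hk, hl]; exact hxy
    have h2 := hN _ hNk
    have h3 : Nat.nth (· ∈ B) (Nat.count (· ∈ B) x + 1) ≤ y := by
      rw [← hl, Nat.nth_le_nth hinf']; exact hkl
    have h4 : x < Nat.nth (· ∈ B) (Nat.count (· ∈ B) x + 1) := by
      conv_lhs => rw [← hk]
      rw [Nat.nth_lt_nth hinf']; omega
    rw [hk] at h2
    generalize Nat.nth (· ∈ B) (Nat.count (· ∈ B) x + 1) = z at *
    have hz : (0 : ℝ) < z := by exact_mod_cast (by omega : 0 < z)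
    rw [div_lt_iff₀ hz] at h2
    have h5 : (z : ℝ) ≤ 2 * x := by exact_mod_cast h3.trans hyx
    linarith
  · obtain ⟨b, hb⟩ := hfin.bddAbove
    obtain ⟨x, hx, hNx, -⟩ := h (b + 1)
    have := hb hx
    omega

theorem free_exists_gt (U : Ultrafilter ℕ) (hfree : IsFreeUltrafilter U)
    (s : Set ℕ) (hs : s ∈ U) (N : ℕ) : ∃ m ∈ s, N < m := by
  by_contra hc
  push Not at hc
  exact hfree s ((Set.finite_Iic N).subset hc) hs

/-- For every free ultrafilter `U` on ℕ, the product `U · U` (copied to ℕ via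
any bijection `e : ℕ × ℕ → ℕ`) is not a thin ultrafilter. -/
theorem prod_not_thin_ultrafilter (U : Ultrafilter ℕ) (hfree : IsFreeUltrafilter U)
    (e : ℕ × ℕ → ℕ) (he : Function.Bijective e) :
    ¬ IsThinUltrafilter (Ultrafilter.map e (ufProd U U)) := by
  intro hW
  obtain ⟨d, hd, -⟩ := Function.bijective_iff_has_inverse.1 he
  obtain ⟨A, hA, hthin⟩ := hW (fun k => 2 ^ (d k).2 + (d k).1)
  rw [Ultrafilter.mem_map, mem_ufProd] at hA
  refine not_thin_aux _ ?_ hthin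
  have key : ∀ n m, e (n, m) ∈ A →
      2 ^ m + n ∈ (fun k => 2 ^ (d k).2 + (d k).1) '' A := by
    intro n m h
    exact ⟨_, h, by simp [hd (n, m)]⟩
  obtain ⟨n, hn, -⟩ := free_exists_gt U hfree _ hA 0
  obtain ⟨n', hn', hnn⟩ := free_exists_gt U hfree _ hA n
  intro N
  obtain ⟨m, ⟨hm1, hm2⟩, hm⟩ := free_exists_gt U hfree _ (Filter.inter_mem hn hn') (N + n')
  have hp : m < 2 ^ m := Nat.lt_two_pow_self
  exact ⟨_, key n m hm1, by omega, _, key n' m hm2, by omega, by omega⟩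
end

section
/- A free ultrafilter U on ℕ is a P-point if and only if for every function F : ℕ → 2^ℕ (the Cantor space of functions from ℕ to {0,1} with the product topology) there exists A ∈ U such that F[A] is the set of terms of a converging sequence, i.e., there exists x ∈ 2^ℕ such that F[A] \ V is finite for every open neighborhood V of x (this includes the case that F[A] is finite). -/
/-- A free ultrafilter `W` on ℕ is a P-point if for every partition
`{A n : n ∈ ℕ}` of ℕ with `A n ∉ W` for all `n`, there is `B ∈ W` such that
`B ∩ A n` is finite for every `n`. -/
def IsPPoint (W : Ultrafilter ℕ) : Prop :=
  ∀ A : ℕ → Set ℕ, Pairwise (Function.onFun Disjoint A) → (⋃ n, A n) = Set.univ →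
    (∀ n, A n ∉ W) → ∃ B ∈ W, ∀ n, (B ∩ A n).Finite

/-- A subset `S` of the Cantor space `2^ℕ` (here `ℕ → Bool` with the product
topology) is the set of terms of a converging sequence if there is a point `x`
such that `S \ V` is finite for every open neighborhood `V` of `x`. -/
def IsConvergingSeqSet (S : Set (ℕ → Bool)) : Prop :=
  ∃ x : ℕ → Bool, ∀ V : Set (ℕ → Bool), IsOpen V → x ∈ V → (S \ V).Finite

/-- A free ultrafilter `U` on ℕ is a P-point iff for every `F : ℕ → 2^ℕ` there
is `A ∈ U` such that `F '' A` is the set of terms of a converging sequence. -/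
theorem p_point_iff_converging_sequences (U : Ultrafilter ℕ)
    (hfree : IsFreeUltrafilter U) :
    IsPPoint U ↔
      ∀ F : ℕ → (ℕ → Bool), ∃ A ∈ U, IsConvergingSeqSet (F '' A) := by
  classical
  constructor
  · intro hP F
    let x : ℕ → Bool := fun i => decide ({k | F k i = true} ∈ U)
    have hx : ∀ i, {k | F k i = x i} ∈ U := by
      intro i
      by_cases h : {k | F k i = true} ∈ U
      · have : x i = true := decide_eq_true h
        rw [this]; exact h
      · have h2 : x i = false := decide_eq_false h
        rw [h2]
        have := Ultrafilter.compl_mem_iff_notMem.mpr h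
        convert this using 1
        ext k; simp
    by_cases h0 : {k | F k = x} ∈ U
    · refine ⟨_, h0, x, fun V _ hV => ?_⟩
      refine Set.Finite.subset Set.finite_empty ?_
      rintro _ ⟨⟨k, hk, rfl⟩, h⟩
      exact h (by rw [show F k = x from hk]; exact hV)
    have hne : ∀ k, F k ≠ x → ∃ i, F k i ≠ x i := fun k hk => Function.ne_iff.mp hk
    let g : ℕ → ℕ := fun k => if h : F k = x then 0 else Nat.find (hne k h) + 1
    have hg : ∀ k i, F k i ≠ x i → g k ≤ i + 1 := by
      intro k i h
      have hk : F k ≠ x := fun e => h (by rw [e])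
      have := Nat.find_min' (hne k hk) h
      simp only [g, dif_neg hk]
      omega
    obtain ⟨B, hB, hfin⟩ := hP (fun n => g ⁻¹' {n})
      (by
        intro m n hmn
        refine Set.disjoint_left.mpr ?_
        intro k hk hk'
        exact hmn (hk.symm.trans hk'))
      (by ext k; simp)
      (by
        intro n hn
        rcases n with _ | n
        · refine h0 (Filter.mem_of_superset hn ?_)
          intro k hk
          by_contra h
          have h : ¬ F k = x := h
          have hk : g k = 0 := hk
          simp only [g] at hk
          rw [dif_neg h] at hk
          omega
        · have hne' := U.nonempty_of_mem (Filter.inter_mem hn (hx n))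
          obtain ⟨k, hk, hk2⟩ := hne'
          have hk : g k = n + 1 := hk
          have hk2 : F k n = x n := hk2
          by_cases h : F k = x
          · simp only [g] at hk
            rw [dif_pos h] at hk
            omega
          · simp only [g] at hk
            rw [dif_neg h] at hk
            have hs := Nat.find_spec (hne k h)
            rw [show Nat.find (hne k h) = n by omega] at hs
            exact hs hk2)
    refine ⟨B, hB, x, fun V hV hxV => ?_⟩
    obtain ⟨I, u, hu, hIu⟩ := isOpen_pi_iff.mp hV x hxV
    have hf : (⋃ i ∈ I, ⋃ n ∈ Finset.range (i + 2), (B ∩ g ⁻¹' {n})).Finite :=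
      Set.Finite.biUnion I.finite_toSet fun i _ =>
        Set.Finite.biUnion (Finset.finite_toSet _) fun n _ => hfin n
    refine (hf.image F).subset ?_
    rintro _ ⟨⟨k, hk, rfl⟩, h⟩
    refine ⟨k, ?_, rfl⟩
    have : ∃ i ∈ I, F k i ≠ x i := by
      by_contra! hc
      refine h (hIu ?_)
      intro i hi
      rw [hc i hi]
      exact (hu i hi).2
    obtain ⟨i, hi, hki⟩ := this
    have := hg k i hki
    simp only [Set.mem_iUnion]
    exact ⟨i, hi, g k, Finset.mem_range.mpr (by omega), hk, rfl⟩
  · intro H A hdisj hcov hA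
    have hex : ∀ k, ∃ n, k ∈ A n := fun k => Set.mem_iUnion.mp (hcov ▸ Set.mem_univ k)
    choose g hg using hex
    have hgu : ∀ k n, k ∈ A n → g k = n := by
      intro k n hk
      by_contra h
      exact Set.disjoint_left.mp (hdisj h) (hg k) hk
    let F : ℕ → ℕ → Bool := fun k i => decide (i = g k ∨ i = g k + 1 + k)
    have hF : ∀ k i, F k i = true ↔ (i = g k ∨ i = g k + 1 + k) := fun k i => decide_eq_true_iff
    have hinj : Function.Injective F := by
      intro k l e
      have h1 := (hF l (g k)).mp (e ▸ (hF k (g k)).mpr (Or.inl rfl))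
      have h2 := (hF l (g k + 1 + k)).mp (e ▸ (hF k _).mpr (Or.inr rfl))
      have h3 := (hF k (g l)).mp (e ▸ (hF l (g l)).mpr (Or.inl rfl))
      have h4 := (hF k (g l + 1 + l)).mp (e ▸ (hF l _).mpr (Or.inr rfl))
      omega
    obtain ⟨B, hB, x, hx⟩ := H F
    have hfin : ∀ i, {k | k ∈ B ∧ F k i ≠ x i}.Finite := by
      intro i
      have ho : IsOpen {y : ℕ → Bool | y i = x i} :=
        (isOpen_discrete ({x i} : Set Bool)).preimage
          (continuous_apply i : Continuous fun y : ℕ → Bool => y i)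
      refine Set.Finite.of_finite_image ((hx _ ho rfl).subset ?_) hinj.injOn
      rintro _ ⟨k, ⟨hk, hk2⟩, rfl⟩
      exact ⟨⟨k, hk, rfl⟩, hk2⟩
    refine ⟨B, hB, fun n => ?_⟩
    have hx0 : ∀ m, x m = false := by
      intro m
      by_contra hm
      have hm : x m = true := by simpa using hm
      have hfi := (hfin m).union (Set.finite_lt_nat m)
      have hc := Ultrafilter.compl_mem_iff_notMem.mpr (hfree _ hfi)
      refine hA m (Filter.mem_of_superset (Filter.inter_mem hB hc) ?_)
      rintro k ⟨hk, hk2⟩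
      have h1 : F k m = true := by
        by_contra h
        exact hk2 (Or.inl ⟨hk, by rw [hm]; exact h⟩)
      have h2 : ¬ k < m := fun h => hk2 (Or.inr h)
      have h3 : m = g k := by
        have := (hF k m).mp h1
        omega
      rw [h3]
      exact hg k
    refine (hfin n).subset ?_
    rintro k ⟨hk, hk2⟩
    refine ⟨hk, ?_⟩
    rw [hx0 n, (hF k n).mpr (Or.inl (hgu k n hk2).symm)]
    simp
end

section
/- A free ultrafilter U on ℕ is a P-point if and only if for every function F : ℕ → ω₁ (the first uncountable ordinal) there exists A ∈ U such that F[A] has order type at most ω, i.e., for every element x of F[A] the set {y ∈ F[A] : y < x} is finite. -/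
/-- The first uncountable ordinal `ω₁`, viewed as the set of countable
ordinals. -/
def Omega1 : Type _ := {o : Ordinal // o < (Cardinal.aleph 1).ord}

noncomputable instance : LinearOrder Omega1 :=
  inferInstanceAs (LinearOrder {o : Ordinal // o < (Cardinal.aleph 1).ord})

/-- A set `S` of countable ordinals has order type at most `ω` iff every
element of `S` has only finitely many predecessors in `S`. -/
def HasOrderTypeLeOmega (S : Set Omega1) : Prop :=
  ∀ x ∈ S, {y ∈ S | y < x}.Finite

theorem ppoint_family {U : Ultrafilter ℕ} (h : IsPPoint U) (A : ℕ → Set ℕ)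
    (hA : ∀ n, A n ∉ U) : ∃ B ∈ U, ∀ n, (B ∩ A n).Finite := by
  by_cases hR : (⋃ n, A n)ᶜ ∈ U
  · refine ⟨_, hR, fun n => ?_⟩
    convert Set.finite_empty
    ext m
    simp only [Set.mem_inter_iff, Set.mem_compl_iff, Set.mem_iUnion, Set.mem_empty_iff_false]
    tauto
  · let C : ℕ → Set ℕ := fun n => Nat.casesOn n (⋃ n, A n)ᶜ (fun k => disjointed A k)
    have hdu : ∀ k, disjointed A k ⊆ ⋃ n, A n := fun k =>
      (disjointed_subset A k).trans (Set.subset_iUnion A k)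
    obtain ⟨B, hB, hf⟩ := h C (by
      rintro (_ | i) (_ | j) hij
      · exact absurd rfl hij
      · exact Set.disjoint_left.2 fun x hx hx' => hx (hdu j hx')
      · exact Set.disjoint_left.2 fun x hx hx' => hx' (hdu i hx)
      · exact disjoint_disjointed A (fun e => hij (by rw [e]))) (by
      ext x
      simp only [Set.mem_univ, iff_true, Set.mem_iUnion]
      by_cases hx : x ∈ ⋃ n, A n
      · rw [← iUnion_disjointed] at hx
        obtain ⟨k, hk⟩ := Set.mem_iUnion.1 hx
        exact ⟨k + 1, hk⟩
      · exact ⟨0, hx⟩) (by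
      rintro (_ | k)
      · exact hR
      · exact fun hk => hA k (Filter.mem_of_superset hk (disjointed_subset A k)))
    refine ⟨B, hB, fun n => ?_⟩
    refine ((Set.finite_Iic n).biUnion (fun k _ => hf (k + 1))).subset ?_
    rintro x ⟨hxB, hxn⟩
    have hx : x ∈ partialSups A n := le_partialSups A n hxn
    rw [← partialSups_disjointed, partialSups_eq_biSup] at hx
    simp only [Set.iSup_eq_iUnion, Set.mem_iUnion] at hx
    obtain ⟨k, hk, hxk⟩ := hx
    exact Set.mem_biUnion (show k ∈ Set.Iic n from hk) ⟨hxB, hxk⟩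

theorem omega1_wf : WellFounded (fun x y : Omega1 => x < y) :=
  InvImage.wf (fun x : Omega1 => (x.1 : Ordinal)) Ordinal.lt_wf

theorem ppoint_forward {U : Ultrafilter ℕ} (h : IsPPoint U) (F : ℕ → Omega1) :
    ∃ A ∈ U, HasOrderTypeLeOmega (F '' A) := by
  by_cases hfib : ∃ v, {n | F n = v} ∈ U
  · obtain ⟨v, hv⟩ := hfib
    refine ⟨_, hv, ?_⟩
    rintro x -
    refine (Set.finite_singleton v).subset ?_
    rintro y ⟨⟨n, hn, rfl⟩, -⟩
    exact hn
  · push Not at hfib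
    classical
    let D : Set ℕ := {n | {m | F m ≤ F n} ∉ U}
    have hD : D ∈ U := by
      by_contra hD
      have hDc : Dᶜ ∈ U := Ultrafilter.compl_mem_iff_notMem.2 hD
      have hne : (F '' Dᶜ).Nonempty := (U.nonempty_of_mem hDc).image F
      obtain ⟨_, ⟨n, hn, rfl⟩, hmin⟩ := omega1_wf.has_min _ hne
      have hn' : {m | F m ≤ F n} ∈ U := by
        by_contra hc
        exact hn hc
      refine hfib (F n) (Filter.mem_of_superset (Filter.inter_mem hn' hDc) ?_)
      rintro m ⟨hm, hmD⟩
      exact le_antisymm hm (not_lt.1 (hmin (F m) ⟨m, hmD, rfl⟩))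
    obtain ⟨B, hB, hf⟩ := ppoint_family h (fun n => if n ∈ D then {m | F m ≤ F n} else ∅) (by
      intro n
      by_cases hn : n ∈ D
      · simp only [if_pos hn]
        exact hn
      · simp only [if_neg hn]
        exact U.empty_notMem)
    refine ⟨B ∩ D, Filter.inter_mem hB hD, ?_⟩
    rintro _ ⟨n, ⟨-, hnD⟩, rfl⟩
    refine ((hf n).image F).subset ?_
    rintro _ ⟨⟨m, ⟨hmB, -⟩, rfl⟩, hlt⟩
    refine ⟨m, ⟨hmB, ?_⟩, rfl⟩
    simp only [if_pos hnD]
    exact hlt.le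

theorem code_lt (a b : ℕ) :
    (Ordinal.omega0 * a + b : Ordinal) < (Cardinal.aleph 1).ord := by
  rw [Cardinal.lt_ord]
  refine lt_of_le_of_lt ?_ Cardinal.aleph0_lt_aleph_one
  simp only [Ordinal.card_add, Ordinal.card_mul, Ordinal.card_omega0, Ordinal.card_nat]
  exact Cardinal.add_le_aleph0.2 ⟨(mul_le_mul' le_rfl Cardinal.natCast_le_aleph0).trans Cardinal.aleph0_mul_aleph0.le,
    Cardinal.natCast_le_aleph0⟩

theorem code_lt_code {a b a' b' : ℕ} (h : a < a') :
    (Ordinal.omega0 * a + b : Ordinal) < Ordinal.omega0 * a' + b' := by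
  calc (Ordinal.omega0 * a + b : Ordinal) < Ordinal.omega0 * a + Ordinal.omega0 :=
        (add_lt_add_iff_left _).2 (Ordinal.natCast_lt_omega0 b)
    _ = Ordinal.omega0 * ((a + 1 : ℕ) : Ordinal) := by
        push_cast
        rw [mul_add, mul_one]
    _ ≤ Ordinal.omega0 * a' := by
        gcongr
        exact h
    _ ≤ _ := le_add_of_nonneg_right zero_le

theorem ppoint_backward {U : Ultrafilter ℕ}
    (h : ∀ F : ℕ → Omega1, ∃ A ∈ U, HasOrderTypeLeOmega (F '' A)) : IsPPoint U := by
  intro A hdis hun hA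
  have hg : ∀ m, ∃ n, m ∈ A n := fun m => Set.mem_iUnion.1 (hun ▸ Set.mem_univ m)
  choose g hg using hg
  obtain ⟨B, hB, ho⟩ := h (fun m => ⟨Ordinal.omega0 * g m + m, code_lt _ _⟩)
  refine ⟨B, hB, fun n => ?_⟩
  have hgn : ∀ m, m ∈ A n → g m = n := by
    intro m hm
    by_contra hne
    exact Set.disjoint_left.1 (hdis hne) (hg m) hm
  have hfin : (⋃ k ∈ Set.Iic n, A k) ∉ U := by
    rw [Ultrafilter.finite_biUnion_mem_iff (Set.finite_Iic n)]
    rintro ⟨k, -, hk⟩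
    exact hA k hk
  have hmem : B ∩ (⋃ k ∈ Set.Iic n, A k)ᶜ ∈ U :=
    Filter.inter_mem hB (Ultrafilter.compl_mem_iff_notMem.2 hfin)
  obtain ⟨x, hxB, hx⟩ := U.nonempty_of_mem hmem
  have hgx : n < g x := by
    by_contra hc
    exact hx (Set.mem_biUnion (show g x ∈ Set.Iic n from not_lt.1 hc) (hg x))
  have hpre := ho _ ⟨x, hxB, rfl⟩
  refine Set.Finite.of_finite_image (hpre.subset ?_) (f := fun m =>
    (⟨Ordinal.omega0 * g m + m, code_lt _ _⟩ : Omega1)) ?_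
  · rintro _ ⟨m, ⟨hmB, hmA⟩, rfl⟩
    refine ⟨⟨m, hmB, rfl⟩, ?_⟩
    have hlt : g m < g x := by
      rw [hgn m hmA]
      exact hgx
    exact code_lt_code hlt
  · rintro m ⟨-, hm⟩ m' ⟨-, hm'⟩ he
    have he' := congrArg Subtype.val he
    simp only [hgn m hm, hgn m' hm'] at he'
    exact_mod_cast (add_right_inj _).1 he'

/-- A free ultrafilter `U` on ℕ is a P-point iff for every `F : ℕ → ω₁` there
is `A ∈ U` such that `F '' A` has order type at most `ω`. -/
theorem p_point_iff_order_type_le_omega (U : Ultrafilter ℕ)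
    (hfree : IsFreeUltrafilter U) :
    IsPPoint U ↔
      ∀ F : ℕ → Omega1, ∃ A ∈ U, HasOrderTypeLeOmega (F '' A) := by
  exact ⟨ppoint_forward, ppoint_backward⟩
end
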